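/- An R-linear map D : B → B lies in Diff^k(B) if and only if the R-linear map φ_D : B ⊗_R B → B, φ_D(a ⊗ c) = D(a)c, vanishes identically on the left ideal μ_k of B^e; in particular, for D ∈ Diff^k(B) the map φ_D descends to a well-defined R-linear map J^k(B) = B^e/μ_k → B. -/

import Mathlib

open TensorProduct MulOpposite

/-- The universal differential `da = 1 ⊗ aᵒᵖ - a ⊗ 1` in `Bᵉ = B ⊗[R] Bᵐᵒᵖ`. -/
noncomputable def duniv (R : Type*) {B : Type*} [CommRing R] [Ring B] [Algebra R B] (a : B) :
    B ⊗[R] Bᵐᵒᵖ :=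
  (1 : B) ⊗ₜ[R] op a - a ⊗ₜ[R] (1 : Bᵐᵒᵖ)

/-- `δ_b(D)(a) = D(a) * b - D(a * b)`. -/
noncomputable def deltaOp (R : Type*) {B : Type*} [CommRing R] [Ring B] [Algebra R B] (b : B)
    (D : B →ₗ[R] B) : B →ₗ[R] B :=
  LinearMap.mulRight R b ∘ₗ D - D ∘ₗ LinearMap.mulRight R b

/-- `φ_D : B ⊗[R] Bᵐᵒᵖ →ₗ[R] B`, `φ_D (a ⊗ cᵒᵖ) = D a * c`. -/
noncomputable def phiD (R : Type*) {B : Type*} [CommRing R] [Ring B] [Algebra R B]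
    (D : B →ₗ[R] B) : B ⊗[R] Bᵐᵒᵖ →ₗ[R] B :=
  TensorProduct.lift (((LinearMap.mul R B).comp D).compl₂
    ((opLinearEquiv R : B ≃ₗ[R] Bᵐᵒᵖ).symm.toLinearMap))

/-- The left ideal (here: `R`-submodule) `μ_k` of `Bᵉ`, spanned by all products
`(a ⊗ bᵒᵖ) · da₀ ⋯ da_k`. -/
noncomputable def muk (R : Type*) (B : Type*) [CommRing R] [Ring B] [Algebra R B] (k : ℕ) :
    Submodule R (B ⊗[R] Bᵐᵒᵖ) :=
  Submodule.span R
    {z | ∃ (a b : B) (f : Fin (k + 1) → B),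
      z = (a ⊗ₜ[R] op b) * (List.ofFn fun i => duniv R (f i)).prod}

/-- `D` is a differential operator of order `k`. -/
def IsDiffk (R : Type*) {B : Type*} [CommRing R] [Ring B] [Algebra R B] (k : ℕ)
    (D : B →ₗ[R] B) : Prop :=
  ∀ f : Fin (k + 1) → B, (List.ofFn f).foldr (deltaOp R) D = 0

/-!
Under `D ↦ φ_D`, right multiplication by `db` on `Bᵉ` becomes the operator `δ_b`:
`φ_D (z * db) = φ_{δ_b D} z`. Peeling the factors off the right, `φ_D` sends the generator
`(a ⊗ bᵒᵖ) * da₀ ⋯ da_k` of `μ_k` to `(δ_{a₀} ∘ ⋯ ∘ δ_{a_k}) (D) (a) * b`, with the `δ`s in the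
order of the `da`s. It vanishes for all choices if `D` is a differential operator of order `k`, and
`b = 1` gives the converse.
-/

section

variable {R B : Type*} [CommRing R] [Ring B] [Algebra R B]

theorem deltaOp_apply (b : B) (D : B →ₗ[R] B) (a : B) :
    deltaOp R b D a = D a * b - D (a * b) :=
  rfl

theorem tmul_mul_duniv (a b : B) (c : Bᵐᵒᵖ) :
    a ⊗ₜ[R] c * duniv R b = a ⊗ₜ[R] (c * op b) - (a * b) ⊗ₜ[R] c := by
  simp only [duniv, mul_sub, Algebra.TensorProduct.tmul_mul_tmul, mul_one]

theorem phiD_tmul (D : B →ₗ[R] B) (a : B) (c : Bᵐᵒᵖ) :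
    phiD R D (a ⊗ₜ[R] c) = D a * unop c :=
  rfl

theorem phiD_mul_duniv (D : B →ₗ[R] B) (z : B ⊗[R] Bᵐᵒᵖ) (b : B) :
    phiD R D (z * duniv R b) = phiD R (deltaOp R b D) z := by
  induction z with
  | zero => simp only [zero_mul, map_zero]
  | add x y hx hy => simp only [add_mul, map_add, hx, hy]
  | tmul a c =>
    calc phiD R D (a ⊗ₜ[R] c * duniv R b)
        = D a * (b * unop c) - D (a * b) * unop c := by
          simp only [tmul_mul_duniv, map_sub, phiD_tmul, unop_mul, unop_op]
      _ = deltaOp R b D a * unop c := by rw [deltaOp_apply, sub_mul, mul_assoc]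
      _ = phiD R (deltaOp R b D) (a ⊗ₜ[R] c) := (phiD_tmul _ a c).symm

theorem phiD_mul_prod_map_duniv (D : B →ₗ[R] B) (z : B ⊗[R] Bᵐᵒᵖ) (l : List B) :
    phiD R D (z * (l.map (duniv R)).prod) = phiD R (l.foldr (deltaOp R) D) z := by
  induction l generalizing z with
  | nil => rw [List.map_nil, List.prod_nil, mul_one, List.foldr_nil]
  | cons b l ih =>
    rw [List.map_cons, List.prod_cons, ← mul_assoc, ih, phiD_mul_duniv, List.foldr_cons]

theorem phiD_tmul_mul_prod_ofFn_duniv {n : ℕ} (D : B →ₗ[R] B) (a : B) (c : Bᵐᵒᵖ)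
    (f : Fin n → B) :
    phiD R D (a ⊗ₜ[R] c * (List.ofFn fun i => duniv R (f i)).prod) =
      (List.ofFn f).foldr (deltaOp R) D a * unop c := by
  rw [← phiD_tmul, ← phiD_mul_prod_map_duniv, List.map_ofFn, Function.comp_def]

theorem muk_le_ker_phiD_iff {k : ℕ} {D : B →ₗ[R] B} :
    muk R B k ≤ LinearMap.ker (phiD R D) ↔ IsDiffk R k D := by
  constructor
  · intro hker f
    ext a
    have hgen : phiD R D (a ⊗ₜ[R] op 1 * (List.ofFn fun i => duniv R (f i)).prod) = 0 :=
      hker (Submodule.subset_span ⟨a, 1, f, rfl⟩)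
    rwa [phiD_tmul_mul_prod_ofFn_duniv, unop_op, mul_one] at hgen
  · intro hD
    refine Submodule.span_le.mpr ?_
    rintro _ ⟨a, b, f, rfl⟩
    rw [SetLike.mem_coe, LinearMap.mem_ker, phiD_tmul_mul_prod_ofFn_duniv, hD f,
      LinearMap.zero_apply, zero_mul]

end

theorem stmt2 {R B : Type*} [CommRing R] [Ring B] [Algebra R B] (k : ℕ) (D : B →ₗ[R] B) :
    (IsDiffk R k D ↔ ∀ z ∈ muk R B k, phiD R D z = 0) ∧
    (IsDiffk R k D →
      ∃ g : ((B ⊗[R] Bᵐᵒᵖ) ⧸ muk R B k) →ₗ[R] B, g ∘ₗ (muk R B k).mkQ = phiD R D) :=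
  ⟨muk_le_ker_phiD_iff.symm, fun hD =>
    ⟨(muk R B k).liftQ (phiD R D) (muk_le_ker_phiD_iff.mpr hD), Submodule.liftQ_mkQ _ _ _⟩⟩
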